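/- Let R be a Noetherian ring, M a finitely generated R-module, x = x_1, ..., x_r a sequence of elements of R, and N a submodule of M such that N ⊆ ⋂_{n>0} (x_1^n, ..., x_r^n)^lim_M. Then, writing M̄ = M/N, the limit closure of x in M̄ satisfies (x)^lim_{M̄} = (x)^lim_M / N. -/

import Mathlib

/-!
Write `p = x₁⋯x_r` and `J n = (x₁ⁿ, …, x_rⁿ)M`. Since `x_i^k ∣ p^k`, multiplication by `p^k` carries
`J n` into `J (n + k)`; hence `m ∈ (x)^lim_M` if and only if `p^k m ∈ J (k + 1)` for some `k`.

If the class of `m` lies in `(x)^lim` of `M/N`, then `p^k m = a + z` with `a ∈ J (k + 1)` and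
`z ∈ N`. As `N ⊆ (x₁^{k+1}, …, x_r^{k+1})^lim_M`, some `p^j` carries `z`, and with it `a`, into
`J (k + 1 + j)`. Hence `p^{j+k} m ∈ J (j + k + 1)`.
-/

open IsLocalRing

/-- The limit closure `(x)^lim_M = ⋃_{n>0} ((x₁^{n+1}, …, x_r^{n+1})M :_M (x₁⋯x_r)^n)` of a
sequence `x = x₁, …, x_r` of elements of `R` in the module `M`; the union of the increasing
family of submodules is expressed as a supremum. -/
def limitClosure {R : Type*} [CommRing R] {M : Type*} [AddCommGroup M] [Module R M]
    {r : ℕ} (x : Fin r → R) : Submodule R M :=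
  ⨆ n : ℕ, (Ideal.span (Set.range fun i => x i ^ (n + 2)) • (⊤ : Submodule R M)).comap
    (LinearMap.lsmul R M ((∏ i, x i) ^ (n + 1)))

section PowersSubmodule

variable {R : Type*} [CommSemiring R] {M M' : Type*} [AddCommMonoid M] [Module R M]
  [AddCommMonoid M'] [Module R M'] {ι : Type*}

variable (M) in
/-- The submodule `(x_i^n : i ∈ ι)M` of `M`, whose colons by powers of the product of the `x_i`
make up the limit closure. The module is an explicit argument, as `x` and `n` do not determine
it. -/
def powersSubmodule (x : ι → R) (n : ℕ) : Submodule R M :=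
  Ideal.span (Set.range fun i => x i ^ n) • ⊤

lemma powersSubmodule_pow (x : ι → R) (n k : ℕ) :
    powersSubmodule M (fun i => x i ^ n) k = powersSubmodule M x (n * k) := by
  simp only [powersSubmodule, ← pow_mul]

lemma map_powersSubmodule_le (f : M →ₗ[R] M') (x : ι → R) (n : ℕ) :
    (powersSubmodule M x n).map f ≤ powersSubmodule M' x n := by
  rw [powersSubmodule, Submodule.map_smul'']
  exact Submodule.smul_mono le_rfl le_top

lemma map_powersSubmodule_of_surjective {f : M →ₗ[R] M'} (hf : Function.Surjective f)
    (x : ι → R) (n : ℕ) :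
    (powersSubmodule M x n).map f = powersSubmodule M' x n := by
  rw [powersSubmodule, Submodule.map_smul'', Submodule.map_top, LinearMap.range_eq_top.2 hf,
    powersSubmodule]

lemma prod_pow_smul_mem_powersSubmodule [Fintype ι] {x : ι → R} {n : ℕ} {a : M}
    (ha : a ∈ powersSubmodule M x n) (k : ℕ) :
    (∏ i, x i) ^ k • a ∈ powersSubmodule M x (n + k) := by
  suffices h : powersSubmodule M x n ≤
      (powersSubmodule M x (n + k)).comap (LinearMap.lsmul R M ((∏ i, x i) ^ k)) from h ha
  rw [powersSubmodule, Submodule.span_smul_eq]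
  refine Submodule.set_smul_le _ _ _ ?_
  rintro _ m ⟨i, rfl⟩ -
  obtain ⟨c, hc⟩ : x i ^ k ∣ (∏ i, x i) ^ k :=
    pow_dvd_pow_of_dvd (Finset.dvd_prod_of_mem x (Finset.mem_univ i)) k
  have hfactor : (∏ i, x i) ^ k • x i ^ n • m = x i ^ (n + k) • c • m := by
    rw [hc, smul_smul, smul_smul]
    congr 1
    ring
  rw [Submodule.mem_comap, LinearMap.lsmul_apply, hfactor]
  exact Submodule.smul_mem_smul (Ideal.subset_span ⟨i, rfl⟩) Submodule.mem_top

end PowersSubmodule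

section LimitClosure

variable {R : Type*} [CommRing R] {M M' : Type*} [AddCommGroup M] [Module R M]
  [AddCommGroup M'] [Module R M'] {r : ℕ}

lemma mem_limitClosure_iff {x : Fin r → R} {m : M} :
    m ∈ limitClosure x ↔ ∃ k : ℕ, (∏ i, x i) ^ k • m ∈ powersSubmodule M x (k + 1) := by
  have hstep {k : ℕ} {y : M} (hy : (∏ i, x i) ^ k • y ∈ powersSubmodule M x (k + 1)) :
      (∏ i, x i) ^ (k + 1) • y ∈ powersSubmodule M x (k + 2) := by
    rw [pow_succ', mul_smul]
    simpa only [pow_one] using prod_pow_smul_mem_powersSubmodule hy 1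
  have hmono : Monotone fun n : ℕ => (powersSubmodule M x (n + 2)).comap
      (LinearMap.lsmul R M ((∏ i, x i) ^ (n + 1))) :=
    monotone_nat_of_le_succ fun _ _ hm => hstep hm
  refine (Submodule.mem_iSup_of_directed _ hmono.directed_le).trans ⟨?_, ?_⟩
  · rintro ⟨n, hn⟩
    exact ⟨n + 1, hn⟩
  · rintro ⟨k, hk⟩
    exact ⟨k, hstep hk⟩

lemma exists_prod_pow_smul_mem_of_mem_limitClosure_pow {x : Fin r → R} {n : ℕ} {m : M}
    (hm : m ∈ limitClosure fun i => x i ^ n) :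
    ∃ k : ℕ, (∏ i, x i) ^ k • m ∈ powersSubmodule M x (n + k) := by
  obtain ⟨k, hk⟩ := mem_limitClosure_iff.1 hm
  rw [Finset.prod_pow, ← pow_mul, powersSubmodule_pow, mul_add_one, add_comm] at hk
  exact ⟨n * k, hk⟩

lemma map_limitClosure_le (f : M →ₗ[R] M') (x : Fin r → R) :
    (limitClosure x).map f ≤ limitClosure x := by
  rintro _ ⟨m, hm, rfl⟩
  obtain ⟨k, hk⟩ := mem_limitClosure_iff.1 hm
  refine mem_limitClosure_iff.2 ⟨k, map_powersSubmodule_le f x _ ?_⟩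
  rw [← map_smul]
  exact Submodule.mem_map_of_mem hk

lemma comap_limitClosure_le_of_surjective {f : M →ₗ[R] M'} (hf : Function.Surjective f)
    {x : Fin r → R}
    (hker : LinearMap.ker f ≤ ⨅ n : ℕ, limitClosure fun i => x i ^ (n + 1)) :
    (limitClosure x).comap f ≤ limitClosure x := by
  intro m hm
  obtain ⟨k, hk⟩ := mem_limitClosure_iff.1 (Submodule.mem_comap.1 hm)
  rw [← map_smul, ← map_powersSubmodule_of_surjective hf] at hk
  obtain ⟨a, ha, hfa⟩ := hk
  have hz : (∏ i, x i) ^ k • m - a ∈ LinearMap.ker f := LinearMap.sub_mem_ker_iff.2 hfa.symm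
  obtain ⟨j, hj⟩ :=
    exists_prod_pow_smul_mem_of_mem_limitClosure_pow ((Submodule.mem_iInf _).1 (hker hz) k)
  have hsum := add_mem hj (prod_pow_smul_mem_powersSubmodule ha j)
  rw [← smul_add, sub_add_cancel, smul_smul, ← pow_add, add_right_comm, add_comm k j] at hsum
  exact mem_limitClosure_iff.2 ⟨j + k, hsum⟩

theorem limitClosure_quotient_general (x : Fin r → R) (N : Submodule R M)
    (hN : N ≤ ⨅ n : ℕ, limitClosure (M := M) (fun i => x i ^ (n + 1))) :
    limitClosure (M := M ⧸ N) x = (limitClosure (M := M) x).map N.mkQ := by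
  refine le_antisymm ?_ (map_limitClosure_le N.mkQ x)
  rw [← Submodule.map_comap_eq_of_surjective N.mkQ_surjective (limitClosure x)]
  exact Submodule.map_mono <|
    comap_limitClosure_le_of_surjective N.mkQ_surjective (N.ker_mkQ.trans_le hN)

end LimitClosure

/-- If `N ⊆ ⋂_{n>0} (x₁^n, …, x_r^n)^lim_M`, then, writing `M̄ = M/N`, one has
`(x)^lim_{M̄} = (x)^lim_M / N`. -/
theorem limitClosure_quotient
    {R : Type*} [CommRing R] [IsNoetherianRing R]
    {M : Type*} [AddCommGroup M] [Module R M] [Module.Finite R M]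
    {r : ℕ} (x : Fin r → R) (N : Submodule R M)
    (hN : N ≤ ⨅ n : ℕ, limitClosure (M := M) (fun i => x i ^ (n + 1))) :
    limitClosure (M := M ⧸ N) x = (limitClosure (M := M) x).map N.mkQ :=
  limitClosure_quotient_general x N hN
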